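/- Let α > −1 and let f : [0,1] → ℝ be continuous. Then lim_{n→∞} (∫₀¹ rⁿ f(r)(1−r²)^α dr) / (∫₀¹ rⁿ (1−r²)^α dr) = f(1). -/

import Mathlib

/-!
The quotient is the mean of `f` with respect to the weights `rⁿ dν(r)`, where `ν` is the finite
measure with density `(1 - r²)^α` on `(0, 1)`. Since `r ↦ r` has its unique maximum on `[0, 1]` at
`1`, and `ν` charges every neighbourhood of `1`, the normalized weights concentrate at `1`; this is
the peak-function theorem
`tendsto_setIntegral_pow_smul_of_unique_maximum_of_isCompact_of_measure_nhdsWithin_pos`.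
The finiteness of `ν` is `integrableOn_weight`, which uses the factorization
`(1 - r²)^α = (1 - r)^α (1 + r)^α` and `α > -1`.
-/

open MeasureTheory Set Filter Topology

lemma integrableOn_weight (α : ℝ) (hα : -1 < α) :
    IntegrableOn (fun r : ℝ => (1 - r ^ 2) ^ α) (Ioo 0 1) := by
  have h1 : IntegrableOn (fun r : ℝ => (1 - r) ^ α) (Icc 0 1) := by
    have h := (intervalIntegral.intervalIntegrable_rpow' (a := 0) (b := 1) hα).comp_sub_left 1
    rw [integrableOn_Icc_iff_integrableOn_Ioc,
      ← intervalIntegrable_iff_integrableOn_Ioc_of_le zero_le_one]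
    simpa using h.symm
  have h2 : ContinuousOn (fun r : ℝ => (1 + r) ^ α) (Icc 0 1) := by
    refine ContinuousOn.rpow_const (by fun_prop) fun x hx => Or.inl ?_
    linarith [hx.1]
  refine ((h1.mul_continuousOn h2 isCompact_Icc).mono_set Ioo_subset_Icc_self).congr_fun
    (fun r hr => ?_) measurableSet_Ioo
  simp only
  rw [← Real.mul_rpow (by linarith [hr.2]) (by linarith [hr.1])]
  congr 1
  ring

/-- The measure on `(0, 1)` with density `(1 - r²)^α`, viewed as a measure on `ℝ`. -/
noncomputable def weightMeasure (α : ℝ) : Measure ℝ :=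
  (volume.restrict (Ioo (0 : ℝ) 1)).withDensity fun r => ENNReal.ofReal ((1 - r ^ 2) ^ α)

lemma weight_pos (α : ℝ) {r : ℝ} (hr : r ∈ Ioo (0 : ℝ) 1) : 0 < (1 - r ^ 2) ^ α :=
  Real.rpow_pos_of_pos (by nlinarith [hr.1, hr.2]) α

lemma measurable_weight (α : ℝ) :
    Measurable fun r : ℝ => ENNReal.ofReal ((1 - r ^ 2) ^ α) := by
  fun_prop

lemma isFiniteMeasure_weightMeasure (α : ℝ) (hα : -1 < α) :
    IsFiniteMeasure (weightMeasure α) :=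
  isFiniteMeasure_withDensity_ofReal (integrableOn_weight α hα).2

lemma setIntegral_weightMeasure (α : ℝ) (g : ℝ → ℝ) :
    ∫ r in Icc (0 : ℝ) 1, g r ∂(weightMeasure α) =
      ∫ r in Ioo (0 : ℝ) 1, g r * (1 - r ^ 2) ^ α := by
  rw [weightMeasure, restrict_withDensity measurableSet_Icc,
    Measure.restrict_restrict measurableSet_Icc, inter_eq_right.2 Ioo_subset_Icc_self,
    integral_withDensity_eq_integral_toReal_smul (measurable_weight α)
      (ae_of_all _ fun _ => ENNReal.ofReal_lt_top)]
  refine setIntegral_congr_fun measurableSet_Ioo fun r hr => ?_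
  simp only [smul_eq_mul]
  rw [ENNReal.toReal_ofReal (weight_pos α hr).le, mul_comm]

/-- The measure `weightMeasure α` charges every one-sided neighbourhood of `1` in `[0, 1]`, as
its density is positive on the nonempty open set `(0, 1) ∩ u`. -/
lemma weightMeasure_pos (α : ℝ) (u : Set ℝ) (hu : IsOpen u) (h1 : (1 : ℝ) ∈ u) :
    0 < weightMeasure α (u ∩ Icc 0 1) := by
  rw [pos_iff_ne_zero, weightMeasure, Ne, withDensity_apply_eq_zero (measurable_weight α),
    Measure.restrict_apply' measurableSet_Ioo]
  intro h0
  have hne : (u ∩ Ioo (0 : ℝ) 1).Nonempty := by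
    have : (1 : ℝ) ∈ closure (Ioo (0 : ℝ) 1) := by
      rw [closure_Ioo zero_ne_one]; exact right_mem_Icc.2 zero_le_one
    exact mem_closure_iff.1 this u hu h1
  refine ((hu.inter isOpen_Ioo).measure_pos volume hne).ne' (measure_mono_null ?_ h0)
  rintro r ⟨hru, hr⟩
  exact ⟨⟨by simpa using weight_pos α hr, hru, Ioo_subset_Icc_self hr⟩, hr⟩

/-- For `α > -1` and continuous `f : [0,1] → ℝ`,
`lim_{n→∞} (∫₀¹ rⁿ f(r)(1−r²)^α dr) / (∫₀¹ rⁿ (1−r²)^α dr) = f(1)`. -/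
theorem stmt16 (α : ℝ) (hα : -1 < α) (f : ℝ → ℝ)
    (hf : ContinuousOn f (Set.Icc 0 1)) :
    Filter.Tendsto (fun n : ℕ =>
      (∫ r in Set.Ioo (0:ℝ) 1, r ^ n * f r * (1 - r ^ 2) ^ α) /
      (∫ r in Set.Ioo (0:ℝ) 1, r ^ n * (1 - r ^ 2) ^ α))
      Filter.atTop (nhds (f 1)) := by
  haveI := isFiniteMeasure_weightMeasure α hα
  have h1 : (1 : ℝ) ∈ Icc (0 : ℝ) 1 := right_mem_Icc.2 zero_le_one
  have key :=
    tendsto_setIntegral_pow_smul_of_unique_maximum_of_isCompact_of_measure_nhdsWithin_pos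
      (μ := weightMeasure α) (x₀ := (1 : ℝ)) (c := fun r => r) (g := f) isCompact_Icc
      (weightMeasure_pos α) continuousOn_id (fun y hy hne => lt_of_le_of_ne hy.2 hne)
      (fun x hx => hx.1) one_pos h1 (hf.integrableOn_compact isCompact_Icc) (hf 1 h1)
  refine key.congr fun n => ?_
  rw [setIntegral_weightMeasure, setIntegral_weightMeasure, smul_eq_mul, div_eq_inv_mul]
  simp only [smul_eq_mul]
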